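/- Let F be an hke collection. Then F is a maximal hke collection if and only if |F| = 2^{α(F)}. -/

import Mathlib

open Finset

/-- The union of a finite collection of finite sets. -/
def famUnion (Γ : Finset (Finset ℕ)) : Finset ℕ := Γ.sup id

/-- The intersection of a finite collection of finite sets
(equal to the usual intersection when the collection is nonempty). -/
def famInter (Γ : Finset (Finset ℕ)) : Finset ℕ :=
  (Γ.sup id).filter (fun x => ∀ A ∈ Γ, x ∈ A)

/-- `F` is a hereditary König–Egerváry (hke) collection with `α(F) = α`:
`α` is a positive integer and `|⋃Γ| + |⋂Γ| = 2α` for every nonempty subcollection `Γ` of `F`. -/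
def IsHKE (F : Finset (Finset ℕ)) (α : ℕ) : Prop :=
  0 < α ∧ ∀ Γ ⊆ F, Γ.Nonempty → (famUnion Γ).card + (famInter Γ).card = 2 * α

/-- `F` is a maximal hke collection: it is an hke collection and no collection
properly containing it is an hke collection. -/
def IsMaxHKE (F : Finset (Finset ℕ)) : Prop :=
  (∃ α, IsHKE F α) ∧ ∀ F' : Finset (Finset ℕ), F ⊂ F' → ¬ ∃ β, IsHKE F' β

/-!
Let `F` be an hke collection with `A₀ ∈ F`, and let `J ⊇ ⋃ F` have `2α` elements. Applied to
`Γ ∪ {A₀}`, the hke condition says that as many points of `A₀` lie in every member of `Γ` as points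
of `J \ A₀` lie in no member of `Γ`. By Möbius inversion over `Γ` there is a bijection
`e : A₀ ≃ J \ A₀` such that each `A ∈ F` contains exactly one of `a` and `e a`, for every `a ∈ A₀`.
Hence `F` lies in the collection of the `2 ^ α` transversals of the pairs `{a, e a}`. That
collection is itself hke, because swapping each pair exchanges the intersection of a family of
transversals with the complement of its union.
-/

theorem exists_equiv_of_map_univ_val_eq {ι κ P : Type*} [Fintype ι] [Fintype κ] {u : ι → P}
    {w : κ → P} (h : univ.val.map u = univ.val.map w) : ∃ e : ι ≃ κ, ∀ i, w (e i) = u i := by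
  classical
  have fiberEquiv (p : P) : Nonempty ({i // u i = p} ≃ {k // w k = p}) := by
    have hcount := congrArg (Multiset.count p) h
    simp only [Multiset.count_map, eq_comm (a := p)] at hcount
    rwa [← Fintype.card_eq, Fintype.card_subtype, Fintype.card_subtype]
  exact ⟨.ofFiberEquiv fun p ↦ (fiberEquiv p).some, Equiv.ofFiberEquiv_map _⟩

section MoebiusInversion

variable {P : Type*} [PartialOrder P] [DecidableLE P]

-- A maximal element of `s` is forced to occur in `t`, so it can be removed from both.
theorem multiset_eq_of_countP_le_eq {s t : Multiset P}
    (h : ∀ p, s.countP (p ≤ ·) = t.countP (p ≤ ·)) : s = t := by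
  classical
  induction s using Multiset.strongInductionOn generalizing t with | ih s ih
  have exists_ge_iff (p : P) : (∃ x ∈ s, p ≤ x) ↔ ∃ y ∈ t, p ≤ y := by
    rw [← Multiset.countP_pos, ← Multiset.countP_pos, h]
  rcases eq_or_ne s 0 with rfl | hs
  · refine (Multiset.eq_zero_of_forall_notMem fun y hy ↦ ?_).symm
    simpa using (exists_ge_iff y).2 ⟨y, hy, le_rfl⟩
  obtain ⟨m, hms, hmax⟩ : ∃ m, Maximal (· ∈ s) m := by
    simpa using s.toFinset.exists_maximal (Multiset.toFinset_nonempty.2 hs)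
  have hmt : m ∈ t := by
    obtain ⟨y, hyt, hmy⟩ := (exists_ge_iff m).1 ⟨m, hms, le_rfl⟩
    obtain ⟨x, hxs, hyx⟩ := (exists_ge_iff y).2 ⟨y, hyt, le_rfl⟩
    rwa [hmy.antisymm (hyx.trans (hmax hxs (hmy.trans hyx)))]
  obtain ⟨s, rfl⟩ := Multiset.exists_cons_of_mem hms
  obtain ⟨t, rfl⟩ := Multiset.exists_cons_of_mem hmt
  rw [ih s (Multiset.lt_cons_self s m) fun p ↦ ?_]
  simpa only [Multiset.countP_cons, Nat.add_right_cancel_iff] using h p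

theorem exists_equiv_of_card_filter_le_eq {ι κ : Type*} {s : Finset ι} {t : Finset κ}
    {u : ι → P} {w : κ → P} (h : ∀ p, #{i ∈ s | p ≤ u i} = #{k ∈ t | p ≤ w k}) :
    ∃ e : s ≃ t, ∀ i, w (e i) = u i := by
  have hmap : s.val.map u = t.val.map w := by
    refine multiset_eq_of_countP_le_eq fun p ↦ ?_
    rw [Multiset.countP_map, Multiset.countP_map]
    exact h p
  refine exists_equiv_of_map_univ_val_eq (u := fun i : s ↦ u i) (w := fun k : t ↦ w k) ?_
  exact (s.val.attach_map_val' u).trans (hmap.trans (t.val.attach_map_val' w).symm)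

end MoebiusInversion

theorem finset_eq_of_coe_subset_range {ι β : Type*} {f : ι → β} {s t : Finset β}
    (hs : ↑s ⊆ Set.range f) (ht : ↑t ⊆ Set.range f) (h : ∀ i, f i ∈ s ↔ f i ∈ t) : s = t := by
  rw [← coe_inj, ← Set.preimage_eq_preimage' hs ht]
  exact Set.ext h

section Transversal

variable {ι β : Type*} [Fintype ι] [DecidableEq ι]

/-- The transversal of the pairs `{g (inl i), g (inr i)}` that takes the left element for `i ∈ S`
and the right one for `i ∉ S`. Indexing by `Finset ι` makes the counting immediate. -/
def transversal (g : ι ⊕ ι ↪ β) : Finset ι ↪ Finset β where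
  toFun S := (S.disjSum Sᶜ).map g
  inj' S T h := by simpa using congrArg toLeft (map_injective g h)

/-- The collection of all transversals of the disjoint pairs `{g (inl i), g (inr i)}`. -/
def transversals (g : ι ⊕ ι ↪ β) : Finset (Finset β) := univ.map (transversal g)

variable {g : ι ⊕ ι ↪ β}

theorem transversal_apply (S : Finset ι) : transversal g S = (S.disjSum Sᶜ).map g := rfl

@[simp]
theorem inl_mem_transversal {S : Finset ι} {i : ι} : g (.inl i) ∈ transversal g S ↔ i ∈ S := by
  simp [transversal_apply]

@[simp]
theorem inr_mem_transversal {S : Finset ι} {i : ι} : g (.inr i) ∈ transversal g S ↔ i ∉ S := by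
  simp [transversal_apply]

theorem transversal_subset_range (S : Finset ι) : ↑(transversal g S) ⊆ Set.range g := by
  simp [transversal_apply]

theorem card_transversals (g : ι ⊕ ι ↪ β) : #(transversals g) = 2 ^ Fintype.card ι := by
  simp [transversals]

theorem mem_transversals_of_inr_mem_iff {A : Finset β} (hrange : ↑A ⊆ Set.range g)
    (hpair : ∀ i, g (.inr i) ∈ A ↔ g (.inl i) ∉ A) : A ∈ transversals g := by
  classical
  refine mem_map.2 ⟨({i | g (.inl i) ∈ A} : Finset ι), mem_univ _, ?_⟩
  refine finset_eq_of_coe_subset_range (transversal_subset_range _) hrange ?_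
  rintro (i | i) <;> simp [hpair]

end Transversal

theorem mem_famUnion {Γ : Finset (Finset ℕ)} {x : ℕ} : x ∈ famUnion Γ ↔ ∃ A ∈ Γ, x ∈ A := by
  simp [famUnion]

theorem mem_famInter {Γ : Finset (Finset ℕ)} (hΓ : Γ.Nonempty) {x : ℕ} :
    x ∈ famInter Γ ↔ ∀ A ∈ Γ, x ∈ A := by
  obtain ⟨B, hB⟩ := hΓ
  simpa [famInter] using fun h ↦ ⟨B, hB, h B hB⟩

section TransversalFamilies

variable {ι : Type*} [Fintype ι] [DecidableEq ι]

theorem famUnion_map_transversal (g : ι ⊕ ι ↪ ℕ) (𝒮 : Finset (Finset ι)) :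
    famUnion (𝒮.map (transversal g)) = ((𝒮.sup id).disjSum (𝒮.inf id)ᶜ).map g := by
  refine finset_eq_of_coe_subset_range (f := g) (fun x hx ↦ ?_) (by simp) ?_
  · obtain ⟨A, hA, hxA⟩ := mem_famUnion.1 hx
    obtain ⟨S, -, rfl⟩ := mem_map.1 hA
    exact transversal_subset_range S hxA
  · rintro (i | i) <;> simp [mem_famUnion]

theorem famInter_map_transversal (g : ι ⊕ ι ↪ ℕ) {𝒮 : Finset (Finset ι)} (h𝒮 : 𝒮.Nonempty) :
    famInter (𝒮.map (transversal g)) = ((𝒮.inf id).disjSum (𝒮.sup id)ᶜ).map g := by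
  have hmem {x : ℕ} : x ∈ famInter (𝒮.map (transversal g)) ↔ ∀ S ∈ 𝒮, x ∈ transversal g S := by
    simp [mem_famInter h𝒮.map]
  refine finset_eq_of_coe_subset_range (f := g) (fun x hx ↦ ?_) (by simp) ?_
  · obtain ⟨S, hS⟩ := h𝒮
    exact transversal_subset_range S (hmem.1 hx S hS)
  · rintro (i | i) <;> simp [hmem, mem_inf]

theorem isHKE_transversals [Nonempty ι] (g : ι ⊕ ι ↪ ℕ) :
    IsHKE (transversals g) (Fintype.card ι) := by
  refine ⟨Fintype.card_pos, fun Γ hΓ hne ↦ ?_⟩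
  obtain ⟨𝒮, -, rfl⟩ := subset_map_iff.1 hΓ
  rw [famUnion_map_transversal, famInter_map_transversal g (map_nonempty.1 hne)]
  simp only [card_map, card_disjSum]
  have := card_add_card_compl (𝒮.sup id)
  have := card_add_card_compl (𝒮.inf id)
  lia

end TransversalFamilies

namespace IsHKE

variable {F : Finset (Finset ℕ)} {α : ℕ}

theorem card_eq (hF : IsHKE F α) {A : Finset ℕ} (hA : A ∈ F) : #A = α := by
  have h := hF.2 {A} (by simpa using hA) (by simp)
  have h_union : famUnion {A} = A := by simp [famUnion]
  have h_inter : famInter {A} = A := by simp [famInter]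
  rw [h_union, h_inter] at h
  lia

theorem exists_famUnion_subset_card_eq_two_mul (hF : IsHKE F α) (hne : F.Nonempty) :
    ∃ J, famUnion F ⊆ J ∧ #J = 2 * α :=
  Infinite.exists_superset_card_eq _ _ (by have := hF.2 F subset_rfl hne; lia)

theorem card_famInter_eq_card_sdiff_famUnion (hF : IsHKE F α) {J : Finset ℕ}
    (hJ : famUnion F ⊆ J) (hcard : #J = 2 * α) {Γ : Finset (Finset ℕ)} (hΓ : Γ ⊆ F)
    (hne : Γ.Nonempty) : #(famInter Γ) = #(J \ famUnion Γ) := by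
  have hΓJ : famUnion Γ ⊆ J := (sup_mono hΓ).trans hJ
  rw [card_sdiff_of_subset hΓJ, hcard, ← hF.2 Γ hΓ hne, Nat.add_sub_cancel_left]

theorem exists_equiv_mem_iff_notMem (hF : IsHKE F α) {J A₀ : Finset ℕ} (hJ : famUnion F ⊆ J)
    (hcard : #J = 2 * α) (hA₀ : A₀ ∈ F) :
    ∃ e : A₀ ≃ ↥(J \ A₀), ∀ A ∈ F, ∀ a, (e a : ℕ) ∈ A ↔ (a : ℕ) ∉ A := by
  let membersAt (x : ℕ) : Finset F := {A | x ∈ A.1}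
  let membersAvoiding (x : ℕ) : Finset F := {A | x ∉ A.1}
  obtain ⟨e, he⟩ : ∃ e : A₀ ≃ ↥(J \ A₀), ∀ a, membersAvoiding (e a) = membersAt a := by
    refine exists_equiv_of_card_filter_le_eq fun Γ ↦ ?_
    let Γ₀ : Finset (Finset ℕ) := (insert ⟨A₀, hA₀⟩ Γ).map (.subtype _)
    have hne : Γ₀.Nonempty := by simp [Γ₀]
    have h_inter : {x ∈ A₀ | Γ ≤ membersAt x} = famInter Γ₀ := by
      ext x
      rw [mem_famInter hne]
      simp [Γ₀, membersAt, subset_iff]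
    have h_union : {x ∈ J \ A₀ | Γ ≤ membersAvoiding x} = J \ famUnion Γ₀ := by
      ext x
      simp [mem_famUnion, Γ₀, membersAvoiding, subset_iff, and_assoc]
    rw [h_inter, h_union]
    exact hF.card_famInter_eq_card_sdiff_famUnion hJ hcard (map_subtype_subset _) hne
  refine ⟨e, fun A hA a ↦ ?_⟩
  have hA_iff : (e a : ℕ) ∉ A ↔ (a : ℕ) ∈ A := by
    simpa [membersAt, membersAvoiding] using Finset.ext_iff.1 (he a) ⟨A, hA⟩
  exact (not_iff_comm.1 hA_iff).symm

theorem exists_subset_transversals (hF : IsHKE F α) {A₀ : Finset ℕ} (hA₀ : A₀ ∈ F) :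
    ∃ g : A₀ ⊕ A₀ ↪ ℕ, F ⊆ transversals g := by
  obtain ⟨J, hJ, hcard⟩ := hF.exists_famUnion_subset_card_eq_two_mul ⟨A₀, hA₀⟩
  obtain ⟨e, he⟩ := hF.exists_equiv_mem_iff_notMem hJ hcard hA₀
  have hinj : Function.Injective (Sum.elim (fun a : A₀ ↦ (a : ℕ)) fun a ↦ (e a : ℕ)) :=
    Subtype.val_injective.sumElim (Subtype.val_injective.comp e.injective)
      fun a b hab ↦ (mem_sdiff.1 (e b).2).2 (hab ▸ a.2)
  refine ⟨⟨_, hinj⟩, fun A hA ↦ mem_transversals_of_inr_mem_iff (fun x hx ↦ ?_) (he A hA)⟩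
  by_cases hx₀ : x ∈ A₀
  · exact ⟨.inl ⟨x, hx₀⟩, rfl⟩
  · have hxJ : x ∈ J \ A₀ := mem_sdiff.2 ⟨hJ (mem_famUnion.2 ⟨A, hA, hx⟩), hx₀⟩
    exact ⟨.inr (e.symm ⟨x, hxJ⟩), by simp⟩

theorem exists_superset_card_eq_two_pow (hF : IsHKE F α) :
    ∃ F', F ⊆ F' ∧ IsHKE F' α ∧ #F' = 2 ^ α := by
  rcases F.eq_empty_or_nonempty with rfl | ⟨A₀, hA₀⟩
  · have : NeZero α := ⟨hF.1.ne'⟩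
    let g : Fin α ⊕ Fin α ↪ ℕ := finSumFinEquiv.toEmbedding.trans Fin.valEmbedding
    exact ⟨transversals g, empty_subset _, by simpa using isHKE_transversals g,
      by simpa using card_transversals g⟩
  · obtain ⟨g, hFg⟩ := hF.exists_subset_transversals hA₀
    have hα : Fintype.card A₀ = α := by rw [Fintype.card_coe, hF.card_eq hA₀]
    have : Nonempty A₀ := Fintype.card_pos_iff.1 (hα ▸ hF.1)
    exact ⟨transversals g, hFg, hα ▸ isHKE_transversals g, hα ▸ card_transversals g⟩

theorem card_le_two_pow (hF : IsHKE F α) : #F ≤ 2 ^ α := by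
  obtain ⟨F', hFF', -, hcard⟩ := hF.exists_superset_card_eq_two_pow
  exact hcard ▸ card_le_card hFF'

end IsHKE

/-- an hke collection `F` is maximal iff `|F| = 2 ^ α(F)`. -/
theorem isMaxHKE_iff_card_eq_two_pow (F : Finset (Finset ℕ)) (α : ℕ) (hF : IsHKE F α) :
    IsMaxHKE F ↔ F.card = 2 ^ α := by
  constructor
  · rintro ⟨-, hmax⟩
    obtain ⟨F', hFF', hF', hcard⟩ := hF.exists_superset_card_eq_two_pow
    obtain rfl : F = F' := hFF'.eq_of_not_ssubset fun hlt ↦ hmax F' hlt ⟨α, hF'⟩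
    exact hcard
  · refine fun hcard ↦ ⟨⟨α, hF⟩, fun F' hFF' ⟨β, hF'⟩ ↦ ?_⟩
    obtain ⟨A, hA⟩ : F.Nonempty := card_pos.1 (hcard ▸ Nat.two_pow_pos α)
    obtain rfl : α = β := (hF.card_eq hA).symm.trans (hF'.card_eq (hFF'.subset hA))
    exact (card_lt_card hFF').not_ge (hcard ▸ hF'.card_le_two_pow)
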